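/- Let p ≥ 5 be a prime. Then the Dedekind–Rademacher sum s(2p, 3; 1/3, −1/2) equals −1/18 if p ≡ 1 (mod 6), and equals 1/18 if p ≡ 5 (mod 6). Moreover, s(p, 2; 3/4, −1/2) = 0. -/

import Mathlib

open Real
open scoped Classical

/-- The generalized sawtooth function `((x))`. -/
noncomputable def saw (x : ℝ) : ℝ :=
  if ∃ m : ℤ, x = m then 0 else Int.fract x - 1 / 2

/-- The Dedekind–Rademacher sum
`s(b,a;x,y) = ∑_{k=0}^{|a|−1} ((x + (b/a)(k+y))) (((k+y)/a))`. -/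
noncomputable def dedekindRademacher (b a : ℤ) (x y : ℝ) : ℝ :=
  ∑ k ∈ Finset.range a.natAbs,
    saw (x + (b : ℝ) / (a : ℝ) * ((k : ℝ) + y)) * saw (((k : ℝ) + y) / (a : ℝ))

/-!
The sawtooth is odd and `1`-periodic, hence zero at half-integers. For `y = -1/2` the weights
`(((k + y) / a))` at `k = 0` and `k = 1` are therefore opposite, and for `a = 3` the one at `k = 2`
is `((1/2)) = 0`. So for `a = 2, 3` the sum is a multiple of
`((x - b / (2a))) - ((x + b / (2a)))`, which depends only on `b` modulo `2a`.
-/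

theorem saw_intCast (n : ℤ) : saw n = 0 :=
  if_pos ⟨n, rfl⟩

theorem saw_of_fract_ne_zero {x : ℝ} (hx : Int.fract x ≠ 0) : saw x = Int.fract x - 1 / 2 :=
  if_neg fun ⟨n, hn⟩ => hx (hn ▸ Int.fract_intCast n)

theorem saw_of_mem_Ioo {x : ℝ} (hx : x ∈ Set.Ioo 0 1) : saw x = x - 1 / 2 := by
  have fract_eq : Int.fract x = x := Int.fract_eq_self.2 ⟨hx.1.le, hx.2⟩
  rw [saw_of_fract_ne_zero (fract_eq.trans_ne hx.1.ne'), fract_eq]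

theorem saw_add_intCast (x : ℝ) (n : ℤ) : saw (x + n) = saw x := by
  by_cases hx : Int.fract x = 0
  · obtain ⟨m, rfl⟩ := Int.fract_eq_zero_iff.1 hx
    rw [← Int.cast_add, saw_intCast, saw_intCast]
  · have fract_add : Int.fract (x + n) = Int.fract x := Int.fract_add_intCast x n
    rw [saw_of_fract_ne_zero (fract_add.trans_ne hx), saw_of_fract_ne_zero hx, fract_add]

theorem saw_neg (x : ℝ) : saw (-x) = -saw x := by
  by_cases hx : Int.fract x = 0
  · obtain ⟨m, rfl⟩ := Int.fract_eq_zero_iff.1 hx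
    rw [← Int.cast_neg, saw_intCast, saw_intCast, neg_zero]
  · rw [saw_of_fract_ne_zero (Int.fract_neg_eq_zero.not.2 hx), saw_of_fract_ne_zero hx,
      Int.fract_neg hx]
    ring

theorem saw_intCast_div_two (n : ℤ) : saw (n / 2) = 0 := by
  have saw_eq_neg : saw (n / 2) = -saw (n / 2) := calc
    saw (n / 2) = saw (-(n / 2) + n) := by congr 1; ring
    _ = -saw (n / 2) := by rw [saw_add_intCast, saw_neg]
  linarith

theorem dedekindRademacher_three_neg_half (b : ℤ) (x : ℝ) :
    dedekindRademacher b 3 x (-1 / 2) = (saw (x - b / 6) - saw (x + b / 6)) / 3 := by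
  have weight_one : saw (1 / 6) = -1 / 3 := by
    rw [saw_of_mem_Ioo (by norm_num)]; norm_num
  have weight_zero : saw (-(1 / 6)) = 1 / 3 := by
    rw [saw_neg, weight_one]; norm_num
  have weight_two : saw (1 / 2) = 0 := by simpa only [Int.cast_one] using saw_intCast_div_two 1
  calc dedekindRademacher b 3 x (-1 / 2)
      = saw (x - b / 6) * saw (-(1 / 6)) + saw (x + b / 6) * saw (1 / 6)
          + saw (x + b / 2) * saw (1 / 2) := by
        simp only [dedekindRademacher, Int.reduceAbs, Finset.sum_range_succ,
          Finset.sum_range_zero, zero_add]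
        push_cast
        ring_nf
    _ = (saw (x - b / 6) - saw (x + b / 6)) / 3 := by
        rw [weight_zero, weight_one, weight_two]; ring

theorem dedekindRademacher_two_neg_half (b : ℤ) (x : ℝ) :
    dedekindRademacher b 2 x (-1 / 2) = (saw (x - b / 4) - saw (x + b / 4)) / 4 := by
  have weight_one : saw (1 / 4) = -1 / 4 := by
    rw [saw_of_mem_Ioo (by norm_num)]; norm_num
  have weight_zero : saw (-(1 / 4)) = 1 / 4 := by
    rw [saw_neg, weight_one]; norm_num
  calc dedekindRademacher b 2 x (-1 / 2)
      = saw (x - b / 4) * saw (-(1 / 4)) + saw (x + b / 4) * saw (1 / 4) := by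
        simp only [dedekindRademacher, Int.reduceAbs, Finset.sum_range_succ,
          Finset.sum_range_zero, zero_add]
        push_cast
        ring_nf
    _ = (saw (x - b / 4) - saw (x + b / 4)) / 4 := by
        rw [weight_zero, weight_one]; ring

theorem dedekindRademacher_two_mul_three_neg_half (b : ℤ) (x : ℝ) :
    dedekindRademacher (2 * b) 3 x (-1 / 2) = (saw (x - b / 3) - saw (x + b / 3)) / 3 := by
  rw [dedekindRademacher_three_neg_half]
  push_cast
  congr! 4 <;> ring

theorem dedekindRademacher_two_mul_three_of_emod_eq_one {b : ℤ} (hb : b % 3 = 1) :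
    dedekindRademacher (2 * b) 3 (1 / 3) (-1 / 2) = -1 / 18 := by
  obtain ⟨q, rfl⟩ : ∃ q, b = 3 * q + 1 := ⟨b / 3, by omega⟩
  have left : (1 / 3 - (3 * q + 1 : ℤ) / 3 : ℝ) = (-q : ℤ) := by push_cast; ring
  have right : (1 / 3 + (3 * q + 1 : ℤ) / 3 : ℝ) = 2 / 3 + q := by push_cast; ring
  rw [dedekindRademacher_two_mul_three_neg_half, left, right, saw_intCast, saw_add_intCast,
    saw_of_mem_Ioo (by norm_num)]
  norm_num

theorem dedekindRademacher_two_mul_three_of_emod_eq_two {b : ℤ} (hb : b % 3 = 2) :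
    dedekindRademacher (2 * b) 3 (1 / 3) (-1 / 2) = 1 / 18 := by
  obtain ⟨q, rfl⟩ : ∃ q, b = 3 * q + 2 := ⟨b / 3, by omega⟩
  have left : (1 / 3 - (3 * q + 2 : ℤ) / 3 : ℝ) = 2 / 3 + (-q - 1 : ℤ) := by push_cast; ring
  have right : (1 / 3 + (3 * q + 2 : ℤ) / 3 : ℝ) = (q + 1 : ℤ) := by push_cast; ring
  rw [dedekindRademacher_two_mul_three_neg_half, left, right, saw_intCast, saw_add_intCast,
    saw_of_mem_Ioo (by norm_num)]
  norm_num

theorem dedekindRademacher_two_three_quarters (b : ℤ) :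
    dedekindRademacher b 2 (3 / 4) (-1 / 2) = 0 := by
  rw [dedekindRademacher_two_neg_half]
  obtain ⟨m, rfl | rfl⟩ := b.even_or_odd'
  · have right : (3 / 4 + (2 * m : ℤ) / 4 : ℝ) = 3 / 4 - (2 * m : ℤ) / 4 + m := by
      push_cast; ring
    rw [right, saw_add_intCast, sub_self, zero_div]
  · have left : (3 / 4 - (2 * m + 1 : ℤ) / 4 : ℝ) = (1 - m : ℤ) / 2 := by push_cast; ring
    have right : (3 / 4 + (2 * m + 1 : ℤ) / 4 : ℝ) = (m + 2 : ℤ) / 2 := by push_cast; ring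
    rw [left, right, saw_intCast_div_two, saw_intCast_div_two, sub_self, zero_div]

theorem stmt_11_general (b : ℤ) :
    (b % 3 = 1 → dedekindRademacher (2 * b) 3 (1 / 3) (-1 / 2) = -1 / 18) ∧
    (b % 3 = 2 → dedekindRademacher (2 * b) 3 (1 / 3) (-1 / 2) = 1 / 18) ∧
    dedekindRademacher b 2 (3 / 4) (-1 / 2) = 0 :=
  ⟨dedekindRademacher_two_mul_three_of_emod_eq_one,
    dedekindRademacher_two_mul_three_of_emod_eq_two, dedekindRademacher_two_three_quarters b⟩

/-- For a prime `p ≥ 5`: `s(2p, 3; 1/3, −1/2) = −1/18` if `p ≡ 1 (mod 6)`,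
`s(2p, 3; 1/3, −1/2) = 1/18` if `p ≡ 5 (mod 6)`, and `s(p, 2; 3/4, −1/2) = 0`. -/
theorem stmt_11 (p : ℕ) (hp : p.Prime) (hp5 : 5 ≤ p) :
    (p % 6 = 1 → dedekindRademacher (2 * (p : ℤ)) 3 (1 / 3) (-1 / 2) = -1 / 18) ∧
    (p % 6 = 5 → dedekindRademacher (2 * (p : ℤ)) 3 (1 / 3) (-1 / 2) = 1 / 18) ∧
    dedekindRademacher (p : ℤ) 2 (3 / 4) (-1 / 2) = 0 := by
  obtain ⟨mod_one, mod_two, vanishes⟩ := stmt_11_general p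
  exact ⟨fun h => mod_one (by omega), fun h => mod_two (by omega), vanishes⟩
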